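/- arXiv:2008.02119 — 2 statements merged into one kernel-verified Lean document; each statement's English description precedes it below -/
import Mathlib

section
/- Let G be a closed subgroup of O(N) satisfying (G2) and σ : G → {1,−1} a continuous surjective group homomorphism. If Ω is a G-invariant nonempty open domain in ℝ^N whose set of G-fixed points Ω^G = {x ∈ Ω : gx = x for all g ∈ G} is nonempty, then m(Ω)^σ_G = m(ℝ^N)^σ_G. -/
open MeasureTheory Real

noncomputable section

abbrev Euc (N : ℕ) := EuclideanSpace ℝ (Fin N)

/-- The critical exponent `2*_s = 2N/(N-2s)`. -/
def twoStar (N : ℕ) (s : ℝ) : ℝ := 2 * N / (N - 2 * s)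

/-- Square of the Gagliardo seminorm `‖u‖²`. -/
def gagSq (N : ℕ) (s : ℝ) (u : Euc N → ℝ) : ℝ :=
  ∫ p : Euc N × Euc N, (u p.1 - u p.2) ^ 2 / dist p.1 p.2 ^ ((N : ℝ) + 2 * s)

/-- The Gagliardo seminorm `‖u‖`. -/
def gagNorm (N : ℕ) (s : ℝ) (u : Euc N → ℝ) : ℝ := Real.sqrt (gagSq N s u)

/-- Finiteness of the Gagliardo seminorm (`‖u‖ < ∞`). -/
def GagFinite (N : ℕ) (s : ℝ) (u : Euc N → ℝ) : Prop :=
  Integrable (fun p : Euc N × Euc N => (u p.1 - u p.2) ^ 2 / dist p.1 p.2 ^ ((N : ℝ) + 2 * s))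

/-- Membership in `Ḣ^s(Ω)`: measurable, in `L^{2*_s}(ℝ^N)`, finite Gagliardo seminorm,
and vanishing a.e. outside `Ω`. -/
structure MemHs (N : ℕ) (s : ℝ) (Ω : Set (Euc N)) (u : Euc N → ℝ) : Prop where
  meas : Measurable u
  lp : Integrable fun x : Euc N => |u x| ^ twoStar N s
  fin : GagFinite N s u
  vanish : ∀ᵐ x : Euc N, x ∉ Ω → u x = 0

/-- The energy functional `E(u;Ω)`. -/
def energy (N : ℕ) (s : ℝ) (Ω : Set (Euc N)) (u : Euc N → ℝ) : ℝ :=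
  (1 / 2) * gagSq N s u - (1 / twoStar N s) * ∫ x in Ω, |u x| ^ twoStar N s

/-- The Nehari functional `N(u;Ω)`. -/
def nehariFun (N : ℕ) (s : ℝ) (Ω : Set (Euc N)) (u : Euc N → ℝ) : ℝ :=
  gagSq N s u - ∫ x in Ω, |u x| ^ twoStar N s

/-- The pairing `⟨E'(u), v⟩` (with domain `Ω`). -/
def pairing (N : ℕ) (s : ℝ) (Ω : Set (Euc N)) (u v : Euc N → ℝ) : ℝ :=
  (∫ p : Euc N × Euc N, (u p.1 - u p.2) * (v p.1 - v p.2) / dist p.1 p.2 ^ ((N : ℝ) + 2 * s))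
    - ∫ x in Ω, |u x| ^ (twoStar N s - 2) * u x * v x

/-- The sharp fractional Sobolev constant `S(N,s)`. -/
def sobolevS (N : ℕ) (s : ℝ) : ℝ :=
  (2 : ℝ) ^ (-(2 * s)) * Real.pi ^ (-s) *
    (Real.Gamma ((N - 2 * s) / 2) / Real.Gamma ((N + 2 * s) / 2)) *
    (Real.Gamma N / Real.Gamma (N / 2)) ^ (2 * s / N)

/-- The orthogonal group `O(N)`. -/
abbrev ONgrp (N : ℕ) := Matrix.orthogonalGroup (Fin N) ℝ

/-- The linear action of `O(N)` on `ℝ^N`. -/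
def ogAct {N : ℕ} (g : ONgrp N) (x : Euc N) : Euc N :=
  Matrix.toEuclideanLin (g : Matrix (Fin N) (Fin N) ℝ) x

/-- `σ`-equivariance of `u : ℝ^N → ℝ` under a subgroup `G` of `O(N)`:
`u (g x) = σ(g) u (x)` for all `g ∈ G`, `x ∈ ℝ^N`. -/
def IsEquivariant {N : ℕ} (G : Subgroup (ONgrp N)) (σ : G →* ℤˣ) (u : Euc N → ℝ) : Prop :=
  ∀ g : G, ∀ x : Euc N, u (ogAct (g : ONgrp N) x) = ((σ g : ℤ) : ℝ) * u x

/-- `G`-invariance of a set. -/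
def IsInvariantSet {N : ℕ} (G : Subgroup (ONgrp N)) (Ω : Set (Euc N)) : Prop :=
  ∀ g : G, ∀ x ∈ Ω, ogAct (g : ONgrp N) x ∈ Ω

/-- Condition (G1): every `G`-orbit is infinite or a single point. -/
def CondG1 {N : ℕ} (G : Subgroup (ONgrp N)) : Prop :=
  ∀ x : Euc N, ({y : Euc N | ∃ g : G, ogAct (g : ONgrp N) x = y}).Infinite ∨
    ∀ g : G, ogAct (g : ONgrp N) x = x

/-- Condition (G2): there is a point `ξ` with `σ = 1` on the stabilizer of `ξ`. -/
def CondG2 {N : ℕ} (G : Subgroup (ONgrp N)) (σ : G →* ℤˣ) : Prop :=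
  ∃ ξ : Euc N, ∀ g : G, ogAct (g : ONgrp N) ξ = ξ → σ g = 1

/-- The Nehari level `m(Ω)^σ_G = inf { E(u;Ω) : u ∈ N(Ω)^σ_G }`. -/
def mval (N : ℕ) (s : ℝ) (Ω : Set (Euc N)) (G : Subgroup (ONgrp N)) (σ : G →* ℤˣ) : ℝ :=
  sInf {c : ℝ | ∃ u : Euc N → ℝ, MemHs N s Ω u ∧ IsEquivariant G σ u ∧
    ¬ (∀ᵐ x : Euc N, u x = 0) ∧ nehariFun N s Ω u = 0 ∧ c = energy N s Ω u}

lemma ogAct_sub {N : ℕ} (g : ONgrp N) (x y : Euc N) : ogAct g (x - y) = ogAct g x - ogAct g y :=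
  map_sub _ x y

lemma ogAct_smul {N : ℕ} (g : ONgrp N) (r : ℝ) (x : Euc N) : ogAct g (r • x) = r • ogAct g x :=
  map_smul _ r x

lemma norm_ogAct {N : ℕ} (g : ONgrp N) (x : Euc N) : ‖ogAct g x‖ = ‖x‖ := by
  have hg := (Matrix.mem_orthogonalGroup_iff' (Fin N) ℝ).1 g.2
  have h : inner ℝ (ogAct g x) (ogAct g x) = inner ℝ x x := by
    rw [EuclideanSpace.inner_eq_star_dotProduct, EuclideanSpace.inner_eq_star_dotProduct]
    change Matrix.mulVec (g : Matrix (Fin N) (Fin N) ℝ) x.ofLp ⬝ᵥ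
      Matrix.mulVec (g : Matrix (Fin N) (Fin N) ℝ) x.ofLp = x.ofLp ⬝ᵥ x.ofLp
    rw [Matrix.dotProduct_mulVec, Matrix.vecMul_mulVec, hg, Matrix.vecMul_one]
  rw [real_inner_self_eq_norm_sq, real_inner_self_eq_norm_sq] at h
  exact (sq_eq_sq₀ (norm_nonneg _) (norm_nonneg _)).1 h

lemma two_lt_twoStar {N : ℕ} {s : ℝ} (hs0 : 0 < s) (hsN : 2 * s < N) : 2 < twoStar N s := by
  rw [twoStar, lt_div_iff₀ (by linarith)]
  linarith

/-- The integrand of `gagSq`. -/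
def gagInt (N : ℕ) (s : ℝ) (u : Euc N → ℝ) (p : Euc N × Euc N) : ℝ :=
  (u p.1 - u p.2) ^ 2 / dist p.1 p.2 ^ ((N : ℝ) + 2 * s)

lemma gagInt_nonneg {N : ℕ} {s : ℝ} (u : Euc N → ℝ) (p : Euc N × Euc N) :
    0 ≤ gagInt N s u p := by
  unfold gagInt; positivity

lemma measurable_gagInt {N : ℕ} {s : ℝ} {u : Euc N → ℝ} (hu : Measurable u) :
    Measurable (gagInt N s u) := by
  unfold gagInt
  exact (((hu.comp measurable_fst).sub (hu.comp measurable_snd)).pow_const 2).div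
    ((measurable_fst.dist measurable_snd).pow_const _)

lemma integrable_kernel {N : ℕ} {s : ℝ} (hN : 2 ≤ N) (hs0 : 0 < s) (hs1 : s < 1) :
    Integrable fun z : Euc N => min 1 (‖z‖ ^ 2) / ‖z‖ ^ ((N : ℝ) + 2 * s) := by
  have : Nonempty (Fin N) := ⟨⟨0, by omega⟩⟩
  have hcast : ((N - 1 : ℕ) : ℝ) = (N : ℝ) - 1 := by
    rw [Nat.cast_sub (by omega)]; simp
  rw [integrable_fun_norm_addHaar (volume : Measure (Euc N))
    (f := fun r : ℝ => min 1 (r ^ 2) / r ^ ((N : ℝ) + 2 * s)), finrank_euclideanSpace_fin]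
  have key : ∀ y : ℝ, 0 < y → y ^ (N - 1) / y ^ ((N : ℝ) + 2 * s) = y ^ (-1 - 2 * s) := by
    intro y hy
    rw [← Real.rpow_natCast y (N - 1), hcast, ← Real.rpow_sub hy]
    congr 1; ring
  rw [← Set.Ioc_union_Ioi_eq_Ioi (zero_le_one' ℝ)]
  refine IntegrableOn.union ?_ ?_
  · have h := (intervalIntegral.intervalIntegrable_rpow' (a := 0) (b := 1)
      (r := 1 - 2 * s) (by linarith)).1
    refine h.congr_fun (fun y hy => ?_) measurableSet_Ioc
    have hy2 : y ^ 2 ≤ 1 := pow_le_one₀ hy.1.le hy.2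
    have : (y : ℝ) ^ (1 - 2 * s) = y ^ (-1 - 2 * s) * y ^ (2 : ℕ) := by
      rw [← Real.rpow_natCast y 2, ← Real.rpow_add hy.1]
      congr 1; push_cast; ring
    simp only [min_eq_right hy2, smul_eq_mul]
    rw [this, ← key y hy.1]; ring
  · have h := integrableOn_Ioi_rpow_of_lt (a := -1 - 2 * s) (c := 1) (by linarith) one_pos
    refine h.congr_fun (fun y hy => ?_) measurableSet_Ioi
    have hy1 : (1 : ℝ) < y := hy
    have hy2 : 1 ≤ y ^ 2 := one_le_pow₀ hy1.le
    simp only [min_eq_left hy2, smul_eq_mul]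
    rw [← key y (by linarith)]; ring

/-- Dominated convergence in `Ḣ^s(ℝ^N)`. -/
lemma tendsto_of_dominated {N : ℕ} {s : ℝ} (hp : 0 < twoStar N s) {u : Euc N → ℝ}
    (hu : MemHs N s Set.univ u) {w : ℕ → Euc N → ℝ} (hw : ∀ n, Measurable (w n))
    (hle : ∀ n x, |w n x| ≤ |u x|)
    (hlim : ∀ x, Filter.Tendsto (fun n => w n x) Filter.atTop (nhds (u x)))
    {b : Euc N × Euc N → ℝ} (hb : Integrable b) (hwb : ∀ n p, gagInt N s (w n) p ≤ b p) :
    (∀ n, MemHs N s Set.univ (w n)) ∧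
      Filter.Tendsto (fun n => (gagSq N s (w n), ∫ x, |w n x| ^ twoStar N s)) Filter.atTop
        (nhds (gagSq N s u, ∫ x, |u x| ^ twoStar N s)) := by
  have hle' : ∀ n x, ‖|w n x| ^ twoStar N s‖ ≤ |u x| ^ twoStar N s := fun n x => by
    rw [Real.norm_of_nonneg (by positivity)]
    exact Real.rpow_le_rpow (abs_nonneg _) (hle n x) hp.le
  have hm : ∀ n, Measurable fun x => |w n x| ^ twoStar N s := fun n =>
    (hw n).norm.pow_const _
  have hwb' : ∀ n p, ‖gagInt N s (w n) p‖ ≤ b p := fun n p => by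
    rw [Real.norm_of_nonneg (gagInt_nonneg _ _)]
    exact hwb n p
  refine ⟨fun n => ⟨hw n, ?_, ?_, by simp⟩, Filter.Tendsto.prodMk_nhds ?_ ?_⟩
  · exact hu.lp.mono' (hm n).aestronglyMeasurable (.of_forall (hle' n))
  · exact hb.mono' (measurable_gagInt (hw n)).aestronglyMeasurable (.of_forall (hwb' n))
  · refine tendsto_integral_of_dominated_convergence b
      (fun n => (measurable_gagInt (hw n)).aestronglyMeasurable) hb
      (fun n => .of_forall (hwb' n)) (.of_forall fun p => ?_)
    exact (((hlim p.1).sub (hlim p.2)).pow 2).div_const _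
  · refine tendsto_integral_of_dominated_convergence _
      (fun n => (hm n).aestronglyMeasurable) hu.lp
      (fun n => .of_forall (hle' n)) (.of_forall fun x => ?_)
    exact (hlim x).abs.rpow_const (Or.inr hp.le)

/-- The soft-thresholding function `t ↦ sign t * (|t| - e)⁺`. -/
def shrink (e t : ℝ) : ℝ := t - max (-e) (min e t)

lemma continuous_shrink (e : ℝ) : Continuous (shrink e) := by
  unfold shrink; fun_prop

lemma shrink_neg (e t : ℝ) (he : 0 ≤ e) : shrink e (-t) = -shrink e t := by
  unfold shrink
  simp only [max_def, min_def]
  split_ifs <;> linarith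

lemma abs_shrink_sub_le (e a b : ℝ) (he : 0 ≤ e) : |shrink e a - shrink e b| ≤ |a - b| := by
  unfold shrink
  rcases abs_cases (a - b) with ⟨h, h'⟩ | ⟨h, h'⟩ <;> rw [h, abs_le] <;>
    simp only [max_def, min_def] <;> split_ifs <;> constructor <;> linarith

lemma shrink_zero (e : ℝ) (he : 0 ≤ e) : shrink e 0 = 0 := by
  simp [shrink, he]

lemma abs_shrink_le (e a : ℝ) (he : 0 ≤ e) : |shrink e a| ≤ |a| := by
  simpa [shrink_zero e he] using abs_shrink_sub_le e a 0 he

lemma shrink_eq_zero {e a : ℝ} (ha : |a| ≤ e) : shrink e a = 0 := by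
  have := abs_le.1 ha
  rw [shrink, min_eq_right this.2, max_eq_right this.1, sub_self]

lemma abs_shrink_sub_self_le (e a : ℝ) (he : 0 ≤ e) : |shrink e a - a| ≤ e := by
  unfold shrink
  rw [abs_le]
  simp only [max_def, min_def]
  split_ifs <;> constructor <;> linarith

lemma shrink_sq_le {e p : ℝ} (he : 0 < e) (hp : 2 ≤ p) (a : ℝ) :
    shrink e a ^ 2 ≤ e ^ (2 - p) * |a| ^ p := by
  rcases le_or_gt |a| e with h | h
  · rw [shrink_eq_zero h, zero_pow two_ne_zero]; positivity
  · have ha : 0 < |a| := he.trans h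
    calc shrink e a ^ 2 = |shrink e a| ^ 2 := (sq_abs _).symm
      _ ≤ |a| ^ 2 := pow_le_pow_left₀ (abs_nonneg _) (abs_shrink_le e a he.le) 2
      _ = |a| ^ (2 - p) * |a| ^ p := by
        rw [← Real.rpow_add ha, sub_add_cancel, ← Real.rpow_natCast]; norm_num
      _ ≤ e ^ (2 - p) * |a| ^ p := by
        exact mul_le_mul_of_nonneg_right (Real.rpow_le_rpow_of_nonpos he h.le (by linarith))
          (by positivity)

lemma sigma_cases {N : ℕ} {G : Subgroup (ONgrp N)} (σ : G →* ℤˣ) (g : G) :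
    ((σ g : ℤ) : ℝ) = 1 ∨ ((σ g : ℤ) : ℝ) = -1 := by
  rcases Int.units_eq_one_or (σ g) with h | h <;> simp [h]

/-- Equivariant functions in `Ḣ^s(ℝ^N)` are approximated by ones which are also in `L²`. -/
lemma exists_sq_integrable_approx {N : ℕ} {s : ℝ} (hs0 : 0 < s) (hsN : 2 * s < N)
    {G : Subgroup (ONgrp N)} {σ : G →* ℤˣ} {u : Euc N → ℝ} (hu : MemHs N s Set.univ u)
    (heq : IsEquivariant G σ u) {U : Set (ℝ × ℝ)}
    (hU : U ∈ nhds (gagSq N s u, ∫ x, |u x| ^ twoStar N s)) :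
    ∃ w, MemHs N s Set.univ w ∧ IsEquivariant G σ w ∧ Integrable (fun x => w x ^ 2) ∧
      (gagSq N s w, ∫ x, |w x| ^ twoStar N s) ∈ U := by
  have hp := two_lt_twoStar hs0 hsN
  have he : ∀ n : ℕ, 0 < 1 / ((n : ℝ) + 1) := fun n => by positivity
  obtain ⟨h1, h2⟩ := tendsto_of_dominated (w := fun n x => shrink (1 / ((n : ℝ) + 1)) (u x))
    (by linarith) hu (fun n => (continuous_shrink _).measurable.comp hu.meas)
    (fun n x => abs_shrink_le _ _ (he n).le)
    (fun x => by
      rw [tendsto_iff_dist_tendsto_zero]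
      refine squeeze_zero (fun _ => dist_nonneg) (fun n => ?_)
        (tendsto_one_div_add_atTop_nhds_zero_nat (𝕜 := ℝ))
      exact abs_shrink_sub_self_le _ _ (he n).le)
    hu.fin
    (fun n p => by
      refine div_le_div_of_nonneg_right ?_ (by positivity)
      exact sq_le_sq.2 (abs_shrink_sub_le _ _ _ (he n).le))
  obtain ⟨n, hn⟩ := (h2.eventually hU).exists
  refine ⟨_, h1 n, fun g x => ?_, ?_, hn⟩
  · simp only [heq g x]
    rcases sigma_cases σ g with h | h <;> rw [h]
    · simp
    · rw [neg_one_mul, neg_one_mul, shrink_neg _ _ (he n).le]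
  · refine (hu.lp.const_mul ((1 / ((n : ℝ) + 1)) ^ (2 - twoStar N s))).mono'
      ((h1 n).meas.pow_const 2).aestronglyMeasurable (.of_forall fun x => ?_)
    rw [Real.norm_of_nonneg (sq_nonneg _)]
    exact shrink_sq_le (he n) hp.le _

/-- A radial cut-off function, equal to `1` for `‖x‖ ≤ R` and to `0` for `2 * R ≤ ‖x‖`. -/
def cutoff {N : ℕ} (R : ℝ) (x : Euc N) : ℝ := max 0 (min 1 (2 - ‖x‖ / R))

lemma cutoff_nonneg {N : ℕ} (R : ℝ) (x : Euc N) : 0 ≤ cutoff R x := le_max_left _ _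

lemma cutoff_le_one {N : ℕ} (R : ℝ) (x : Euc N) : cutoff R x ≤ 1 :=
  max_le zero_le_one (min_le_left _ _)

lemma cutoff_eq_one {N : ℕ} {R : ℝ} (hR : 0 < R) {x : Euc N} (hx : ‖x‖ ≤ R) :
    cutoff R x = 1 := by
  have : ‖x‖ / R ≤ 1 := (div_le_one hR).2 hx
  rw [cutoff, min_eq_left (by linarith), max_eq_right zero_le_one]

lemma cutoff_eq_zero {N : ℕ} {R : ℝ} (hR : 0 < R) {x : Euc N} (hx : 2 * R ≤ ‖x‖) :
    cutoff R x = 0 := by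
  have : 2 ≤ ‖x‖ / R := (le_div_iff₀ hR).2 hx
  exact max_eq_left ((min_le_right _ _).trans (by linarith))

lemma continuous_cutoff {N : ℕ} (R : ℝ) : Continuous (cutoff R : Euc N → ℝ) := by
  unfold cutoff; fun_prop

lemma cutoff_sub_sq_le {N : ℕ} {R : ℝ} (hR : 1 ≤ R) (x y : Euc N) :
    (cutoff R x - cutoff R y) ^ 2 ≤ min 1 (‖x - y‖ ^ 2) := by
  refine le_min ?_ ?_
  · rw [sq_le_one_iff_abs_le_one, abs_le]
    constructor <;>
      linarith [cutoff_nonneg R x, cutoff_nonneg R y, cutoff_le_one R x, cutoff_le_one R y]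
  · refine sq_le_sq.2 ?_
    rw [abs_of_nonneg (norm_nonneg (x - y))]
    calc |cutoff R x - cutoff R y|
        ≤ |(2 - ‖x‖ / R) - (2 - ‖y‖ / R)| := by
          unfold cutoff
          refine (abs_max_sub_max_le_max _ _ _ _).trans ?_
          rw [sub_self, abs_zero, max_eq_right (abs_nonneg _)]
          refine (abs_min_sub_min_le_max _ _ _ _).trans ?_
          rw [sub_self, abs_zero, max_eq_right (abs_nonneg _)]
      _ = |‖x‖ - ‖y‖| / R := by
          rw [show (2 - ‖x‖ / R) - (2 - ‖y‖ / R) = -((‖x‖ - ‖y‖) / R) by ring, abs_neg, abs_div,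
            abs_of_pos (show 0 < R by linarith)]
      _ ≤ |‖x‖ - ‖y‖| := div_le_self (abs_nonneg _) hR
      _ ≤ ‖x - y‖ := abs_norm_sub_norm_le x y

/-- Equivariant functions in `Ḣ^s(ℝ^N)` are approximated by ones with bounded support. -/
lemma exists_bounded_support_approx {N : ℕ} {s : ℝ} (hN : 2 ≤ N) (hs0 : 0 < s) (hs1 : s < 1)
    (hsN : 2 * s < N) {G : Subgroup (ONgrp N)} {σ : G →* ℤˣ} {u : Euc N → ℝ}
    (hu : MemHs N s Set.univ u) (heq : IsEquivariant G σ u) {U : Set (ℝ × ℝ)}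
    (hU : U ∈ nhds (gagSq N s u, ∫ x, |u x| ^ twoStar N s)) :
    ∃ w, MemHs N s Set.univ w ∧ IsEquivariant G σ w ∧
      (∃ R : ℝ, 0 < R ∧ ∀ x, R ≤ ‖x‖ → w x = 0) ∧
      (gagSq N s w, ∫ x, |w x| ^ twoStar N s) ∈ U := by
  have hp := two_lt_twoStar hs0 hsN
  obtain ⟨u, hu, heq, hu2, hU⟩ :=
    exists_sq_integrable_approx hs0 hsN hu heq (interior_mem_nhds.2 hU)
  have hR : ∀ n : ℕ, 1 ≤ (n : ℝ) + 1 := fun n => by linarith [n.cast_nonneg (α := ℝ)]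
  have hR' : ∀ n : ℕ, 0 < (n : ℝ) + 1 := fun n => by linarith [hR n]
  have hconv : Integrable fun p : Euc N × Euc N =>
      u p.2 ^ 2 * (min 1 (‖p.1 - p.2‖ ^ 2) / ‖p.1 - p.2‖ ^ ((N : ℝ) + 2 * s)) :=
    hu2.convolution_integrand (ContinuousLinearMap.mul ℝ ℝ) (integrable_kernel hN hs0 hs1)
  obtain ⟨h1, h2⟩ := tendsto_of_dominated (w := fun n x => cutoff ((n : ℝ) + 1) x * u x)
    (by linarith) hu (fun n => (continuous_cutoff _).measurable.mul hu.meas)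
    (fun n x => by
      rw [abs_mul, abs_of_nonneg (cutoff_nonneg _ _)]
      exact mul_le_of_le_one_left (abs_nonneg _) (cutoff_le_one _ _))
    (fun x => by
      refine tendsto_const_nhds.congr' ?_
      obtain ⟨m, hm⟩ := exists_nat_ge ‖x‖
      filter_upwards [Filter.eventually_ge_atTop m] with n hn
      have : (m : ℝ) ≤ n := by exact_mod_cast hn
      rw [cutoff_eq_one (hR' n) (by linarith), one_mul])
    ((hu.fin.const_mul 2).add (hconv.const_mul 2))
    (fun n p => by
      simp only [Pi.add_apply, gagInt]
      rw [← dist_eq_norm p.1 p.2, mul_div_assoc', mul_div_assoc', mul_div_assoc', ← add_div]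
      refine div_le_div_of_nonneg_right ?_ (by positivity)
      have hc := cutoff_sub_sq_le (hR n) p.1 p.2
      rw [← dist_eq_norm] at hc
      set c := cutoff ((n : ℝ) + 1) p.1
      set d := cutoff ((n : ℝ) + 1) p.2
      have hc2 : c ^ 2 ≤ 1 := pow_le_one₀ (cutoff_nonneg _ _) (cutoff_le_one _ _)
      calc (c * u p.1 - d * u p.2) ^ 2
          = (c * (u p.1 - u p.2) + (c - d) * u p.2) ^ 2 := by ring
        _ ≤ 2 * ((c * (u p.1 - u p.2)) ^ 2 + ((c - d) * u p.2) ^ 2) := add_sq_le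
        _ = 2 * (c ^ 2 * (u p.1 - u p.2) ^ 2) + 2 * (u p.2 ^ 2 * (c - d) ^ 2) := by ring
        _ ≤ 2 * (1 * (u p.1 - u p.2) ^ 2)
            + 2 * (u p.2 ^ 2 * min 1 (dist p.1 p.2 ^ 2)) := by gcongr
        _ = _ := by ring)
  obtain ⟨n, hn⟩ := (h2.eventually (mem_interior_iff_mem_nhds.1 hU)).exists
  refine ⟨_, h1 n, fun g x => ?_, ⟨2 * ((n : ℝ) + 1), by linarith [hR' n], fun x hx => ?_⟩, hn⟩
  · simp only [cutoff, norm_ogAct, heq g x]; ring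
  · simp only [cutoff_eq_zero (hR' n) hx, zero_mul]

/-- Transplantation `x ↦ t r^{(N-2s)/2} w(r (x - x₀))`, which multiplies `gagSq` by `t²` and the
critical integral by `t^{2*_s}`. -/
def transplant (N : ℕ) (s t r : ℝ) (x₀ : Euc N) (w : Euc N → ℝ) (x : Euc N) : ℝ :=
  t * r ^ (((N : ℝ) - 2 * s) / 2) * w (r • (x - x₀))

section Transplant

variable {N : ℕ} {s t r : ℝ} {x₀ : Euc N} {w : Euc N → ℝ}

lemma gagInt_transplant (hr : 0 < r) (p : Euc N × Euc N) :
    gagInt N s (transplant N s t r x₀ w) p =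
      (t ^ 2 * r ^ (2 * (N : ℝ))) * gagInt N s w (r • (p - (x₀, x₀))) := by
  have hd : dist (r • (p.1 - x₀)) (r • (p.2 - x₀)) = r * dist p.1 p.2 := by
    rw [dist_smul₀, dist_sub_right, Real.norm_of_nonneg hr.le]
  have h1 : (r ^ (((N : ℝ) - 2 * s) / 2)) ^ 2 * r ^ ((N : ℝ) + 2 * s) = r ^ (2 * (N : ℝ)) := by
    rw [← Real.rpow_natCast, ← Real.rpow_mul hr.le, ← Real.rpow_add hr]
    congr 1; push_cast; ring
  have h2 : 0 < r ^ ((N : ℝ) + 2 * s) := by positivity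
  simp only [gagInt, transplant, Prod.smul_fst, Prod.smul_snd, Prod.fst_sub, Prod.snd_sub, hd]
  rw [Real.mul_rpow hr.le dist_nonneg, ← h1, ← mul_sub, mul_pow, mul_pow]
  field_simp

lemma rpow_transplant (hsN : 2 * s < N) (ht : 0 < t) (hr : 0 < r) (x : Euc N) :
    |transplant N s t r x₀ w x| ^ twoStar N s =
      (t ^ twoStar N s * r ^ (N : ℝ)) * |w (r • (x - x₀))| ^ twoStar N s := by
  have h : (((N : ℝ) - 2 * s) / 2) * twoStar N s = N := by
    have : (N : ℝ) - 2 * s ≠ 0 := by linarith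
    rw [twoStar]; field_simp
  rw [transplant, abs_mul, abs_of_pos (by positivity), Real.mul_rpow (by positivity) (abs_nonneg _),
    Real.mul_rpow ht.le (by positivity), ← Real.rpow_mul hr.le, h]

lemma isAddHaarMeasure_volume_prod (N : ℕ) :
    (volume : Measure (Euc N × Euc N)).IsAddHaarMeasure :=
  inferInstanceAs ((volume : Measure (Euc N)).prod volume).IsAddHaarMeasure

lemma gagSq_transplant (hr : 0 < r) :
    gagSq N s (transplant N s t r x₀ w) = t ^ 2 * gagSq N s w := by
  have := isAddHaarMeasure_volume_prod N
  change ∫ p, gagInt N s _ p = t ^ 2 * ∫ p, gagInt N s w p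
  simp_rw [gagInt_transplant hr]
  rw [integral_const_mul,
    integral_sub_right_eq_self (fun p : Euc N × Euc N => gagInt N s w (r • p)) (x₀, x₀),
    Measure.integral_comp_smul, Module.finrank_prod, finrank_euclideanSpace_fin,
    abs_of_pos (by positivity), smul_eq_mul]
  have : r ^ (2 * (N : ℝ)) = r ^ (N + N) := by
    rw [← Real.rpow_natCast]; congr 1; push_cast; ring
  rw [this]
  have : r ^ (N + N) ≠ 0 := by positivity
  field_simp

lemma integral_rpow_transplant (hsN : 2 * s < N) (ht : 0 < t) (hr : 0 < r) :
    ∫ x, |transplant N s t r x₀ w x| ^ twoStar N s =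
      t ^ twoStar N s * ∫ x, |w x| ^ twoStar N s := by
  simp_rw [rpow_transplant hsN ht hr]
  rw [integral_const_mul,
    integral_sub_right_eq_self (fun x : Euc N => |w (r • x)| ^ twoStar N s) x₀,
    Measure.integral_comp_smul volume (fun x : Euc N => |w x| ^ twoStar N s),
    finrank_euclideanSpace_fin, abs_of_pos (by positivity), smul_eq_mul, Real.rpow_natCast]
  have : r ^ N ≠ 0 := by positivity
  field_simp

lemma memHs_transplant (hsN : 2 * s < N) (ht : 0 < t) (hr : 0 < r)
    (hw : MemHs N s Set.univ w) {Ω : Set (Euc N)}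
    (hΩ : ∀ x, x ∉ Ω → w (r • (x - x₀)) = 0) :
    MemHs N s Ω (transplant N s t r x₀ w) := by
  have := isAddHaarMeasure_volume_prod N
  refine ⟨?_, ?_, ?_, .of_forall fun x hx => by simp [transplant, hΩ x hx]⟩
  · exact (hw.meas.comp ((measurable_id.sub_const x₀).const_smul r)).const_mul _
  · simp_rw [rpow_transplant hsN ht hr]
    exact ((((integrable_comp_smul_iff volume (fun x : Euc N => |w x| ^ twoStar N s) hr.ne').2
      hw.lp).comp_sub_right x₀)).const_mul _
  · change Integrable (gagInt N s _)
    rw [funext (gagInt_transplant hr)]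
    exact ((((integrable_comp_smul_iff volume (gagInt N s w) hr.ne').2
      hw.fin).comp_sub_right (x₀, x₀))).const_mul _

lemma isEquivariant_transplant {G : Subgroup (ONgrp N)} {σ : G →* ℤˣ}
    (hx₀ : ∀ g : G, ogAct (g : ONgrp N) x₀ = x₀) (hw : IsEquivariant G σ w) :
    IsEquivariant G σ (transplant N s t r x₀ w) := fun g x => by
  have : r • (ogAct (g : ONgrp N) x - x₀) = ogAct (g : ONgrp N) (r • (x - x₀)) := by
    rw [ogAct_smul, ogAct_sub, hx₀]
  rw [transplant, this, hw, transplant]; ring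

end Transplant

lemma setIntegral_eq {N : ℕ} {s : ℝ} (hp : 0 < twoStar N s) {Ω : Set (Euc N)} {u : Euc N → ℝ}
    (hu : ∀ᵐ x, x ∉ Ω → u x = 0) :
    ∫ x in Ω, |u x| ^ twoStar N s = ∫ x, |u x| ^ twoStar N s := by
  refine setIntegral_eq_integral_of_ae_compl_eq_zero ?_
  filter_upwards [hu] with x hx hxΩ
  rw [hx hxΩ, abs_zero, Real.zero_rpow hp.ne']

/-- The values of the energy on the Nehari manifold. -/
def nehariValues (N : ℕ) (s : ℝ) (Ω : Set (Euc N)) (G : Subgroup (ONgrp N)) (σ : G →* ℤˣ) :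
    Set ℝ :=
  {c : ℝ | ∃ u : Euc N → ℝ, MemHs N s Ω u ∧ IsEquivariant G σ u ∧
    ¬ (∀ᵐ x : Euc N, u x = 0) ∧ nehariFun N s Ω u = 0 ∧ c = energy N s Ω u}

lemma nehariValues_subset {N : ℕ} {s : ℝ} (hp : 0 < twoStar N s) (Ω : Set (Euc N))
    (G : Subgroup (ONgrp N)) (σ : G →* ℤˣ) :
    nehariValues N s Ω G σ ⊆ nehariValues N s Set.univ G σ := by
  rintro c ⟨u, hu, heq, h0, hn, rfl⟩
  have h := setIntegral_eq hp hu.vanish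
  refine ⟨u, ⟨hu.meas, hu.lp, hu.fin, by simp⟩, heq, h0, ?_, ?_⟩
  · rw [nehariFun, setIntegral_univ, ← h]; exact hn
  · rw [energy, energy, setIntegral_univ, h]

lemma nonneg_of_mem_nehariValues {N : ℕ} {s : ℝ} (hp : 2 < twoStar N s) {Ω : Set (Euc N)}
    {G : Subgroup (ONgrp N)} {σ : G →* ℤˣ} {c : ℝ} (hc : c ∈ nehariValues N s Ω G σ) :
    0 ≤ c := by
  obtain ⟨u, -, -, -, hn, rfl⟩ := hc
  have h : ∫ x in Ω, |u x| ^ twoStar N s = gagSq N s u := (sub_eq_zero.1 hn).symm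
  have hA : 0 ≤ gagSq N s u := integral_nonneg (gagInt_nonneg u)
  have : 1 / twoStar N s ≤ 1 / 2 := one_div_le_one_div_of_le two_pos hp.le
  rw [energy, h, ← sub_mul]
  exact mul_nonneg (by linarith) hA

/-- Any energy level on the Nehari manifold of `ℝ^N` is nearly attained on that of a neighbourhood
of a fixed point. -/
lemma exists_nehariValue_lt {N : ℕ} {s : ℝ} (hN : 2 ≤ N) (hs0 : 0 < s) (hs1 : s < 1)
    (hsN : 2 * s < N) {G : Subgroup (ONgrp N)} {σ : G →* ℤˣ} {Ω : Set (Euc N)} (hΩ : IsOpen Ω)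
    {x₀ : Euc N} (hx₀ : x₀ ∈ Ω) (hfix : ∀ g : G, ogAct (g : ONgrp N) x₀ = x₀)
    {c : ℝ} (hc : c ∈ nehariValues N s Set.univ G σ) {ε : ℝ} (hε : 0 < ε) :
    ∃ c' ∈ nehariValues N s Ω G σ, c' < c + ε := by
  have hp := two_lt_twoStar hs0 hsN
  obtain ⟨u, hu, heq, h0, hn, rfl⟩ := hc
  rw [nehariFun, setIntegral_univ, sub_eq_zero] at hn
  have hB : 0 < ∫ x, |u x| ^ twoStar N s := by
    refine (integral_nonneg fun x => by positivity).lt_of_ne' fun h => h0 ?_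
    filter_upwards [(integral_eq_zero_iff_of_nonneg (fun x => by positivity) hu.lp).1 h] with x hx
    exact abs_eq_zero.1 ((Real.rpow_eq_zero (abs_nonneg _) (by linarith)).1 hx)
  set q : ℝ := 1 / (twoStar N s - 2) with hq
  let Φ : ℝ × ℝ → ℝ := fun z => (1 / 2 - 1 / twoStar N s) * (((z.1 / z.2) ^ q) ^ 2 * z.1)
  have hΦ : ContinuousAt Φ (gagSq N s u, ∫ x, |u x| ^ twoStar N s) := by
    refine continuousAt_const.mul (ContinuousAt.mul (ContinuousAt.pow ?_ 2) continuousAt_fst)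
    refine (continuousAt_fst.div continuousAt_snd hB.ne').rpow_const (Or.inl ?_)
    rw [hn]
    exact (div_pos hB hB).ne'
  have hΦu : Φ (gagSq N s u, ∫ x, |u x| ^ twoStar N s) = energy N s Set.univ u := by
    simp only [Φ, energy, setIntegral_univ]
    rw [hn, div_self hB.ne', Real.one_rpow]; ring
  have hU : {z : ℝ × ℝ | 0 < z.1 ∧ 0 < z.2 ∧ Φ z < energy N s Set.univ u + ε} ∈
      nhds (gagSq N s u, ∫ x, |u x| ^ twoStar N s) := by
    refine Filter.inter_mem (continuousAt_fst.eventually (lt_mem_nhds ?_))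
      (Filter.inter_mem (continuousAt_snd.eventually (lt_mem_nhds hB))
        (hΦ.eventually (gt_mem_nhds ?_)))
    · rw [hn]; exact hB
    · rw [hΦu]; linarith
  obtain ⟨w, hw, hweq, ⟨R, hR, hwR⟩, hA, hB', hlt⟩ :=
    exists_bounded_support_approx hN hs0 hs1 hsN hu heq hU
  obtain ⟨δ, hδ, hball⟩ := Metric.isOpen_iff.1 hΩ x₀ hx₀
  simp only at hA hB'
  set A := gagSq N s w
  set B := ∫ x, |w x| ^ twoStar N s
  have ht : 0 < (A / B) ^ q := by positivity
  have hr : 0 < R / δ := by positivity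
  have hmem : MemHs N s Ω (transplant N s ((A / B) ^ q) (R / δ) x₀ w) := by
    refine memHs_transplant hsN ht hr hw fun x hx => hwR _ ?_
    have : δ ≤ ‖x - x₀‖ := by
      by_contra! h
      exact hx (hball (by rwa [Metric.mem_ball, dist_eq_norm]))
    rw [norm_smul, Real.norm_of_nonneg hr.le]
    calc R = R / δ * δ := by field_simp
      _ ≤ _ := by gcongr
  have hI : ∫ x in Ω, |transplant N s ((A / B) ^ q) (R / δ) x₀ w x| ^ twoStar N s =
      ((A / B) ^ q) ^ 2 * A := by
    rw [setIntegral_eq (by linarith) hmem.vanish, integral_rpow_transplant hsN ht hr]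
    have h2 : ((A / B) ^ q) ^ twoStar N s = ((A / B) ^ q) ^ 2 * (A / B) := by
      have h3 : q * twoStar N s = q * (2 : ℕ) + 1 := by
        have : twoStar N s - 2 ≠ 0 := by linarith
        rw [hq]; field_simp; push_cast; ring
      rw [← Real.rpow_mul (by positivity), h3, Real.rpow_add (by positivity),
        Real.rpow_mul (by positivity), Real.rpow_natCast, Real.rpow_one]
    change _ * B = _
    rw [h2]
    field_simp
  have hG : gagSq N s (transplant N s ((A / B) ^ q) (R / δ) x₀ w) = ((A / B) ^ q) ^ 2 * A :=
    gagSq_transplant hr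
  refine ⟨_, ⟨_, hmem, isEquivariant_transplant hfix hweq, fun h => ?_, ?_, rfl⟩, ?_⟩
  · have h4 : ∫ x in Ω, |transplant N s ((A / B) ^ q) (R / δ) x₀ w x| ^ twoStar N s = 0 := by
      rw [setIntegral_eq (by linarith) hmem.vanish]
      refine integral_eq_zero_of_ae ?_
      filter_upwards [h] with x hx
      rw [hx, abs_zero, Real.zero_rpow (by linarith)]; rfl
    rw [hI] at h4
    have : 0 < ((A / B) ^ q) ^ 2 * A := by positivity
    linarith
  · rw [nehariFun, hI, hG, sub_self]
  · rw [energy, hI, hG, ← sub_mul]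
    exact hlt

/-- if `Ω` is a `G`-invariant nonempty open domain with a `G`-fixed point,
then `m(Ω)^σ_G = m(ℝ^N)^σ_G`. -/
theorem statement9 (N : ℕ) (s : ℝ) (hN : 2 ≤ N) (hs0 : 0 < s) (hs1 : s < 1)
    (hsN : 2 * s < N)
    (G : Subgroup (ONgrp N)) (hGc : IsClosed (G : Set (ONgrp N)))
    (σ : G →* ℤˣ) (hσ : Continuous σ) (hσs : Function.Surjective σ) (hG2 : CondG2 G σ)
    (Ω : Set (Euc N)) (hΩ : IsOpen Ω) (hΩne : Ω.Nonempty) (hΩG : IsInvariantSet G Ω)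
    (hfix : ∃ x ∈ Ω, ∀ g : G, ogAct (g : ONgrp N) x = x) :
    mval N s Ω G σ = mval N s Set.univ G σ := by
  have hp := two_lt_twoStar hs0 hsN
  obtain ⟨x₀, hx₀, hx₀G⟩ := hfix
  have hsub := nehariValues_subset (by linarith) Ω G σ
  have hbdd : ∀ Ω' : Set (Euc N), BddBelow (nehariValues N s Ω' G σ) := fun Ω' =>
    ⟨0, fun c hc => nonneg_of_mem_nehariValues hp hc⟩
  change sInf (nehariValues N s Ω G σ) = sInf (nehariValues N s Set.univ G σ)
  rcases (nehariValues N s Set.univ G σ).eq_empty_or_nonempty with h | h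
  · rw [h, Set.subset_eq_empty hsub h]
  obtain ⟨c₀, hc₀⟩ := h
  obtain ⟨c₁, hc₁, -⟩ := exists_nehariValue_lt hN hs0 hs1 hsN hΩ hx₀ hx₀G hc₀ one_pos
  refine le_antisymm (le_csInf ⟨c₀, hc₀⟩ fun c hc => ?_) (csInf_le_csInf (hbdd _) ⟨c₁, hc₁⟩ hsub)
  refine le_of_forall_pos_le_add fun ε hε => ?_
  obtain ⟨c', hc', hlt⟩ := exists_nehariValue_lt hN hs0 hs1 hsN hΩ hx₀ hx₀G hc hε
  exact (csInf_le (hbdd _) hc').trans hlt.le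

end
end

section
/- Let Ω ⊆ ℝ^N be a G-invariant open set, where G is a closed subgroup of O(N) satisfying (G2) and σ : G → {1,−1} is a continuous surjective group homomorphism. Then there exists a Palais–Smale sequence at level m(Ω)^σ_G: a sequence (u_n) in Ḣ^s(Ω)^σ_G such that E(u_n;Ω) → m(Ω)^σ_G and sup{ |⟨E'(u_n), φ⟩| : φ ∈ Ḣ^s(Ω)^σ_G, ‖φ‖ ≤ 1 } → 0 as n → ∞. -/
open MeasureTheory Real

noncomputable section

/-- Young's inequality for the derivative of `|·| ^ p`. -/
lemma abs_rpow_sub_two_mul_mul_le {p : ℝ} (hp : 2 < p) (a b : ℝ) :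
    p * |(|a| ^ (p - 2) * a * b)| ≤ (p - 1) * |a| ^ p + |b| ^ p := by
  have hpq : (p / (p - 1)).HolderConjugate p :=
    (Real.HolderConjugate.conjExponent (by linarith : 1 < p)).symm
  have key := Real.young_inequality_of_nonneg
    (Real.rpow_nonneg (abs_nonneg a) (p - 1)) (abs_nonneg b) hpq
  have h1 : (|a| ^ (p - 1)) ^ (p / (p - 1)) = |a| ^ p := by
    rw [← Real.rpow_mul (abs_nonneg a), mul_div_cancel₀ _ (by linarith)]
  have h2 : |(|a| ^ (p - 2) * a * b)| = |a| ^ (p - 1) * |b| := by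
    rw [abs_mul, abs_mul, abs_of_nonneg (Real.rpow_nonneg (abs_nonneg a) _)]
    congr 1
    rcases eq_or_ne a 0 with rfl | ha
    · rw [abs_zero, mul_zero, Real.zero_rpow (by linarith)]
    · rw [← Real.rpow_add_one (abs_ne_zero.mpr ha)]
      congr 1
      ring
  rw [h1] at key
  rw [h2]
  calc p * (|a| ^ (p - 1) * |b|) ≤ p * (|a| ^ p / (p / (p - 1)) + |b| ^ p / p) := by gcongr
    _ = _ := by
      have : p - 1 ≠ 0 := by linarith
      field_simp

/-- The tangent-line inequality for the convex function `|·| ^ p`. -/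
lemma abs_rpow_add_ge {p : ℝ} (hp : 2 < p) (a c : ℝ) :
    |a| ^ p + p * (|a| ^ (p - 2) * a * c) ≤ |a + c| ^ p := by
  have key := abs_rpow_sub_two_mul_mul_le hp a (a + c)
  have h := mul_le_mul_of_nonneg_left (le_abs_self (|a| ^ (p - 2) * a * (a + c)))
    (by linarith : 0 ≤ p)
  have h1 : |a| ^ (p - 2) * a * a = |a| ^ p := by
    rw [mul_assoc, ← abs_mul_abs_self a, ← mul_assoc]
    rcases eq_or_ne a 0 with rfl | ha
    · rw [abs_zero, mul_zero, Real.zero_rpow (by linarith)]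
    · rw [← Real.rpow_add_one (abs_ne_zero.mpr ha), ← Real.rpow_add_one (abs_ne_zero.mpr ha)]
      congr 1
      ring
  have h2 : p * (|a| ^ (p - 2) * a * (a + c))
      = p * |a| ^ p + p * (|a| ^ (p - 2) * a * c) := by
    rw [← h1]
    ring
  linarith

lemma one_add_rpow_le {q x : ℝ} (hq : 0 ≤ q) (hx : 0 ≤ 1 + x) (hqx : |q * x| ≤ 1) :
    (1 + x) ^ q ≤ 1 + q * x + (q * x) ^ 2 := by
  have h1 : (1 + x) ^ q ≤ Real.exp (q * x) := by
    calc (1 + x) ^ q ≤ Real.exp x ^ q :=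
          Real.rpow_le_rpow hx (by linarith [Real.add_one_le_exp x]) hq
      _ = Real.exp (q * x) := by rw [← Real.exp_mul, mul_comm]
  linarith [(abs_le.mp (Real.abs_exp_sub_one_sub_id_le hqx)).2]

/-- The bilinear form associated with the Gagliardo seminorm. -/
def gagInner (N : ℕ) (s : ℝ) (u v : Euc N → ℝ) : ℝ :=
  ∫ p : Euc N × Euc N, (u p.1 - u p.2) * (v p.1 - v p.2) / dist p.1 p.2 ^ ((N : ℝ) + 2 * s)

/-- The derivative of `(1 / 2*_s) ∫_Ω |u| ^ 2*_s` at `u` in the direction `v`. -/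
def powPairing (N : ℕ) (s : ℝ) (Ω : Set (Euc N)) (u v : Euc N → ℝ) : ℝ :=
  ∫ x in Ω, |u x| ^ (twoStar N s - 2) * u x * v x

section

variable {N : ℕ} {s : ℝ} {Ω : Set (Euc N)} {u v : Euc N → ℝ}

lemma gagSq_nonneg (N : ℕ) (s : ℝ) (u : Euc N → ℝ) : 0 ≤ gagSq N s u :=
  integral_nonneg fun p => by positivity

lemma gagSq_smul (t : ℝ) (u : Euc N → ℝ) :
    gagSq N s (fun x => t * u x) = t ^ 2 * gagSq N s u := by
  rw [gagSq, gagSq, ← integral_const_mul]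
  congr 1 with p
  ring

lemma integral_abs_rpow_smul {t : ℝ} (ht : 0 ≤ t) (r : ℝ) (u : Euc N → ℝ) :
    ∫ x in Ω, |t * u x| ^ r = t ^ r * ∫ x in Ω, |u x| ^ r := by
  rw [← integral_const_mul]
  congr 1 with x
  rw [abs_mul, abs_of_nonneg ht, Real.mul_rpow ht (abs_nonneg _)]

lemma measurable_gag_kernel (hu : Measurable u) (hv : Measurable v) :
    Measurable fun p : Euc N × Euc N =>
      (u p.1 - u p.2) * (v p.1 - v p.2) / dist p.1 p.2 ^ ((N : ℝ) + 2 * s) := by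
  have h1 : Measurable fun p : Euc N × Euc N => dist p.1 p.2 := by fun_prop
  have h2 : Measurable fun p : Euc N × Euc N => dist p.1 p.2 ^ ((N : ℝ) + 2 * s) :=
    h1.pow_const _
  fun_prop

lemma two_mul_abs_gag_kernel_le (p : Euc N × Euc N) :
    2 * |(u p.1 - u p.2) * (v p.1 - v p.2) / dist p.1 p.2 ^ ((N : ℝ) + 2 * s)|
      ≤ (u p.1 - u p.2) ^ 2 / dist p.1 p.2 ^ ((N : ℝ) + 2 * s)
        + (v p.1 - v p.2) ^ 2 / dist p.1 p.2 ^ ((N : ℝ) + 2 * s) := by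
  have hD : 0 ≤ dist p.1 p.2 ^ ((N : ℝ) + 2 * s) := by positivity
  rw [abs_div, abs_of_nonneg hD, abs_mul, ← mul_div_assoc, ← add_div]
  gcongr
  nlinarith [sq_nonneg (|u p.1 - u p.2| - |v p.1 - v p.2|), sq_abs (u p.1 - u p.2),
    sq_abs (v p.1 - v p.2)]

lemma integrable_gag_kernel (hu : MemHs N s Ω u) (hv : MemHs N s Ω v) :
    Integrable fun p : Euc N × Euc N =>
      (u p.1 - u p.2) * (v p.1 - v p.2) / dist p.1 p.2 ^ ((N : ℝ) + 2 * s) := by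
  refine (hu.fin.add hv.fin).mono' (measurable_gag_kernel hu.meas hv.meas).aestronglyMeasurable
    (Filter.Eventually.of_forall fun p => ?_)
  have h := two_mul_abs_gag_kernel_le (s := s) (u := u) (v := v) p
  rw [Real.norm_eq_abs, Pi.add_apply]
  linarith [abs_nonneg
    ((u p.1 - u p.2) * (v p.1 - v p.2) / dist p.1 p.2 ^ ((N : ℝ) + 2 * s))]

lemma two_mul_abs_gagInner_le (hu : MemHs N s Ω u) (hv : MemHs N s Ω v) :
    2 * |gagInner N s u v| ≤ gagSq N s u + gagSq N s v := by
  rw [gagSq, gagSq, ← integral_add hu.fin hv.fin]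
  calc 2 * |gagInner N s u v|
      ≤ 2 * ∫ p : Euc N × Euc N,
          |(u p.1 - u p.2) * (v p.1 - v p.2) / dist p.1 p.2 ^ ((N : ℝ) + 2 * s)| := by
        gcongr
        exact abs_integral_le_integral_abs
    _ ≤ _ := by
        rw [← integral_const_mul]
        exact integral_mono ((integrable_gag_kernel hu hv).abs.const_mul 2)
          (hu.fin.add hv.fin) two_mul_abs_gag_kernel_le

lemma gag_kernel_add_smul (t : ℝ) (p : Euc N × Euc N) :
    (u p.1 + t * v p.1 - (u p.2 + t * v p.2)) ^ 2 / dist p.1 p.2 ^ ((N : ℝ) + 2 * s)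
      = (u p.1 - u p.2) ^ 2 / dist p.1 p.2 ^ ((N : ℝ) + 2 * s)
        + 2 * t * ((u p.1 - u p.2) * (v p.1 - v p.2) / dist p.1 p.2 ^ ((N : ℝ) + 2 * s))
        + t ^ 2 * ((v p.1 - v p.2) ^ 2 / dist p.1 p.2 ^ ((N : ℝ) + 2 * s)) := by
  ring

lemma gagSq_add_smul (hu : MemHs N s Ω u) (hv : MemHs N s Ω v) (t : ℝ) :
    gagSq N s (fun x => u x + t * v x)
      = gagSq N s u + 2 * t * gagInner N s u v + t ^ 2 * gagSq N s v := by
  have hi := (integrable_gag_kernel hu hv).const_mul (2 * t)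
  rw [gagSq, gagSq, gagSq, gagInner, ← integral_const_mul, ← integral_const_mul,
    ← integral_add hu.fin hi]
  refine Eq.trans ?_ (integral_add (hu.fin.add hi) (hv.fin.const_mul (t ^ 2)))
  exact integral_congr_ae (Filter.Eventually.of_forall (gag_kernel_add_smul t))

lemma memHs_zero (hp : 2 < twoStar N s) : MemHs N s Ω fun _ => 0 where
  meas := measurable_const
  lp := by simp [Real.zero_rpow (by linarith : twoStar N s ≠ 0)]
  fin := by simp [GagFinite]
  vanish := by simp

lemma MemHs.memLp (hp : 2 < twoStar N s) (hu : MemHs N s Ω u) :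
    MemLp u (ENNReal.ofReal (twoStar N s)) := by
  rw [← integrable_norm_rpow_iff hu.meas.aestronglyMeasurable
    (by simp; linarith) ENNReal.ofReal_ne_top, ENNReal.toReal_ofReal (by linarith)]
  exact hu.lp

lemma MemHs.add_smul (hp : 2 < twoStar N s) (hu : MemHs N s Ω u) (hv : MemHs N s Ω v) (t : ℝ) :
    MemHs N s Ω fun x => u x + t * v x where
  meas := hu.meas.add (hv.meas.const_mul t)
  lp := by
    have h := ((hu.memLp hp).add ((hv.memLp hp).const_mul t)).integrable_norm_rpow
      (by simp; linarith) ENNReal.ofReal_ne_top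
    rw [ENNReal.toReal_ofReal (by linarith)] at h
    exact h
  fin := by
    have h := (hu.fin.add ((integrable_gag_kernel hu hv).const_mul (2 * t))).add
      (hv.fin.const_mul (t ^ 2))
    exact h.congr (Filter.Eventually.of_forall fun p => (gag_kernel_add_smul t p).symm)
  vanish := by
    filter_upwards [hu.vanish, hv.vanish] with x h1 h2 hx
    rw [h1 hx, h2 hx, mul_zero, add_zero]

lemma MemHs.smul (hp : 2 < twoStar N s) (hu : MemHs N s Ω u) (t : ℝ) :
    MemHs N s Ω fun x => t * u x := by
  simpa using (memHs_zero hp).add_smul hp hu t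

lemma IsEquivariant.add_smul {G : Subgroup (ONgrp N)} {σ : G →* ℤˣ}
    (hu : IsEquivariant G σ u) (hv : IsEquivariant G σ v) (t : ℝ) :
    IsEquivariant G σ fun x => u x + t * v x := fun g x => by
  simp only [hu g x, hv g x]
  ring

lemma isEquivariant_zero {G : Subgroup (ONgrp N)} {σ : G →* ℤˣ} :
    IsEquivariant G σ fun _ => 0 := fun g x => by simp

lemma IsEquivariant.smul {G : Subgroup (ONgrp N)} {σ : G →* ℤˣ}
    (hu : IsEquivariant G σ u) (t : ℝ) : IsEquivariant G σ fun x => t * u x := by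
  simpa using isEquivariant_zero.add_smul hu t

lemma integral_abs_rpow_add_smul_ge (hp : 2 < twoStar N s) (hu : MemHs N s Ω u)
    (hv : MemHs N s Ω v) (t : ℝ) :
    (∫ x in Ω, |u x| ^ twoStar N s) + twoStar N s * t * powPairing N s Ω u v
      ≤ ∫ x in Ω, |u x + t * v x| ^ twoStar N s := by
  have hi : Integrable fun x => |u x| ^ (twoStar N s - 2) * u x * v x := by
    refine ((hu.lp.const_mul (twoStar N s - 1)).add hv.lp).mono' ?_
      (Filter.Eventually.of_forall fun x => ?_)
    · have h1 : Measurable fun x => |u x| ^ (twoStar N s - 2) :=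
        (measurable_norm.comp hu.meas).pow_const _
      exact ((h1.mul hu.meas).mul hv.meas).aestronglyMeasurable
    · have h := abs_rpow_sub_two_mul_mul_le hp (u x) (v x)
      rw [Real.norm_eq_abs, Pi.add_apply]
      nlinarith [abs_nonneg (|u x| ^ (twoStar N s - 2) * u x * v x)]
  have hi' := hi.integrableOn (s := Ω) |>.const_mul (twoStar N s * t)
  rw [powPairing, ← integral_const_mul, ← integral_add hu.lp.integrableOn hi']
  refine integral_mono (hu.lp.integrableOn.add hi') (hu.add_smul hp hv t).lp.integrableOn
    fun x => ?_
  have h := abs_rpow_add_ge hp (u x) (t * v x)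
  linarith

lemma integral_abs_rpow_eq_zero_of_gagSq_eq_zero (hN : 2 ≤ N)
    (hu : MemHs N s Ω u) (h0 : gagSq N s u = 0) : ∫ x in Ω, |u x| ^ twoStar N s = 0 := by
  have : Nonempty (Fin N) := ⟨⟨0, by omega⟩⟩
  have h1 := (integral_eq_zero_iff_of_nonneg (fun p => by positivity) hu.fin).mp h0
  have h2 : ∀ᵐ p : Euc N × Euc N, u p.1 = u p.2 := by
    filter_upwards [h1] with p hpz
    rcases div_eq_zero_iff.mp hpz with h | h
    · nlinarith [sq_eq_zero_iff.mp h]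
    · by_cases hd : dist p.1 p.2 = 0
      · rw [dist_eq_zero.mp hd]
      · exact absurd h (Real.rpow_pos_of_pos (lt_of_le_of_ne dist_nonneg (Ne.symm hd)) _).ne'
  obtain ⟨x, hx⟩ := (Measure.ae_ae_of_ae_prod h2).exists
  have h3 : Integrable fun _ : Euc N => |u x| ^ twoStar N s := by
    refine hu.lp.congr ?_
    filter_upwards [hx] with y hy
    simp only [hy]
  have h4 : |u x| ^ twoStar N s = 0 := by
    rcases integrable_const_iff.mp h3 with h | h
    · exact h
    · have h5 := h.measure_univ_lt_top
      rw [measure_univ_of_isAddLeftInvariant] at h5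
      exact absurd h5 (lt_irrefl _)
  refine integral_eq_zero_of_ae (ae_restrict_of_ae ?_)
  filter_upwards [hx] with y hy
  rw [← hy, h4, Pi.zero_apply]

lemma energy_of_nehariFun_eq_zero (h : nehariFun N s Ω u = 0) :
    energy N s Ω u = (1 / 2 - 1 / twoStar N s) * gagSq N s u := by
  rw [energy, ← sub_eq_zero.mp h]
  ring

lemma mval_le {G : Subgroup (ONgrp N)} {σ : G →* ℤˣ} (hp : 2 < twoStar N s)
    (hu : MemHs N s Ω u) (hG : IsEquivariant G σ u) (hne : ¬ ∀ᵐ x : Euc N, u x = 0)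
    (h0 : nehariFun N s Ω u = 0) : mval N s Ω G σ ≤ energy N s Ω u := by
  refine csInf_le ⟨0, ?_⟩ ⟨u, hu, hG, hne, h0, rfl⟩
  rintro _ ⟨w, -, -, -, hw, rfl⟩
  rw [energy_of_nehariFun_eq_zero hw]
  refine mul_nonneg ?_ (gagSq_nonneg N s w)
  rw [sub_nonneg]
  exact one_div_le_one_div_of_le two_pos hp.le

/-- A positive Nehari level yields a Sobolev inequality with the corresponding constant. -/
lemma integral_abs_rpow_le_of_mval_pos {G : Subgroup (ONgrp N)} {σ : G →* ℤˣ} (hN : 2 ≤ N)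
    (hp : 2 < twoStar N s) {R : ℝ} (hR : 0 < R)
    (hm : mval N s Ω G σ = (1 / 2 - 1 / twoStar N s) * R)
    (hv : MemHs N s Ω v) (hG : IsEquivariant G σ v) :
    ∫ x in Ω, |v x| ^ twoStar N s ≤ R * (gagSq N s v / R) ^ (twoStar N s / 2) := by
  set p := twoStar N s with hpdef
  set A := gagSq N s v with hA
  set J := ∫ x in Ω, |v x| ^ p with hJ
  have hA0 : 0 ≤ A := gagSq_nonneg N s v
  have hJ0 : 0 ≤ J := integral_nonneg fun x => by positivity
  rcases hJ0.eq_or_lt with hJz | hJpos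
  · rw [← hJz]
    positivity
  have hApos : 0 < A := hA0.lt_of_ne fun h =>
    hJpos.ne' (integral_abs_rpow_eq_zero_of_gagSq_eq_zero hN hv h.symm)
  set t := (A / J) ^ (1 / (p - 2)) with ht
  have hAJ : 0 < A / J := by positivity
  have htpos : 0 < t := Real.rpow_pos_of_pos hAJ _
  have htp : t ^ (p - 2) = A / J := by
    rw [ht, ← Real.rpow_mul hAJ.le, one_div_mul_cancel (by linarith), Real.rpow_one]
  have hneh : nehariFun N s Ω (fun x => t * v x) = 0 := by
    have h1 : t ^ p = A / J * t ^ 2 := by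
      rw [← htp, ← Real.rpow_natCast t 2, ← Real.rpow_add htpos]
      norm_num
    rw [nehariFun, gagSq_smul, integral_abs_rpow_smul htpos.le, ← hpdef, ← hA, ← hJ, h1]
    field_simp
    ring
  have hne : ¬ ∀ᵐ x : Euc N, t * v x = 0 := fun h => hJpos.ne' <|
    integral_eq_zero_of_ae <| ae_restrict_of_ae <| by
      filter_upwards [h] with x hx
      rw [(mul_eq_zero.mp hx).resolve_left htpos.ne', abs_zero, Pi.zero_apply,
        Real.zero_rpow (by linarith)]
  have hle := mval_le hp (hv.smul hp t) (hG.smul t) hne hneh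
  have hκ : 0 < 1 / 2 - 1 / p := sub_pos.mpr (one_div_lt_one_div_of_lt two_pos hp)
  rw [energy_of_nehariFun_eq_zero hneh, hm, gagSq_smul, ← hpdef, ← hA] at hle
  have hRt : R ≤ t ^ 2 * A := le_of_mul_le_mul_left hle hκ
  have h2 : R / A ≤ t ^ 2 := by rwa [div_le_iff₀ hApos]
  have h3 : (R / A) ^ ((p - 2) / 2) ≤ A / J := by
    calc (R / A) ^ ((p - 2) / 2) ≤ (t ^ 2) ^ ((p - 2) / 2) :=
          Real.rpow_le_rpow (by positivity) h2 (by linarith)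
      _ = A / J := by
          rw [← Real.rpow_natCast t 2, ← Real.rpow_mul htpos.le, ← htp]
          congr 1
          push_cast
          ring
  have h4 : (A / R) ^ (p / 2) = A / R * (A / R) ^ ((p - 2) / 2) := by
    rw [← Real.rpow_one_add' (by positivity) (by linarith)]
    congr 1
    ring
  have h5 : (A / R) ^ ((p - 2) / 2) * (R / A) ^ ((p - 2) / 2) = 1 := by
    rw [← Real.mul_rpow (by positivity) (by positivity), div_mul_div_cancel₀ hR.ne',
      div_self hApos.ne', Real.one_rpow]
  have h6 : 0 ≤ (A / R) ^ ((p - 2) / 2) := by positivity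
  have h7 := mul_le_mul_of_nonneg_left h3 h6
  rw [h5, mul_div_assoc', le_div_iff₀ hJpos, one_mul] at h7
  rw [h4]
  calc J ≤ (A / R) ^ ((p - 2) / 2) * A := h7
    _ = _ := by field_simp

/-- A nearly minimal element of the Nehari manifold is a nearly critical point. -/
lemma mul_neg_pairing_le {G : Subgroup (ONgrp N)} {σ : G →* ℤˣ} (hN : 2 ≤ N)
    (hp : 2 < twoStar N s) {R : ℝ} (hR : 0 < R)
    (hm : mval N s Ω G σ = (1 / 2 - 1 / twoStar N s) * R)
    (hu : MemHs N s Ω u) (hGu : IsEquivariant G σ u) (hneh : nehariFun N s Ω u = 0)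
    (hv : MemHs N s Ω v) (hGv : IsEquivariant G σ v) (hv1 : gagSq N s v ≤ 1)
    {t : ℝ} (ht1 : |t| ≤ 1) (ht : twoStar N s / 2 * (|t| * ((R + 4) / R)) ≤ 1)
    (hRu : R ≤ gagSq N s u) (huR : gagSq N s u ≤ R + t ^ 2) :
    -(t * pairing N s Ω u v) ≤
      (1 + (twoStar N s / 2 * ((R + 4) / R)) ^ 2 * R) * t ^ 2 := by
  set p := twoStar N s with hpdef
  set ρ := gagSq N s u with hρ
  set b := gagInner N s u v with hb
  set ℓ := powPairing N s Ω u v with hℓ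
  set a := gagSq N s v with ha
  have hpair : pairing N s Ω u v = b - ℓ := rfl
  have ha0 : 0 ≤ a := gagSq_nonneg N s v
  have hJ : ∫ x in Ω, |u x| ^ p = ρ := (sub_eq_zero.mp hneh).symm
  have h1 := integral_abs_rpow_add_smul_ge hp hu hv t
  have h2 := integral_abs_rpow_le_of_mval_pos hN hp hR hm (hu.add_smul hp hv t)
    (hGu.add_smul hGv t)
  have h3 := gagSq_add_smul hu hv t
  have h4 := gagSq_nonneg N s fun x => u x + t * v x
  rw [h3] at h2 h4
  rw [← hpdef, hJ] at h1
  have hb2 : 2 * |b| ≤ ρ + a := two_mul_abs_gagInner_le hu hv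
  have htt : t ^ 2 ≤ |t| := by
    rw [← sq_abs]
    nlinarith [abs_nonneg t]
  obtain ⟨x, hx⟩ : ∃ x, x = (ρ + 2 * t * b + t ^ 2 * a) / R - 1 := ⟨_, rfl⟩
  have hRx : R * x = (ρ - R) + 2 * t * b + t ^ 2 * a := by
    rw [hx]
    field_simp
    ring
  have hxabs : |x| ≤ |t| * ((R + 4) / R) := by
    rw [mul_div_assoc', le_div_iff₀ hR, ← abs_of_pos hR, ← abs_mul, mul_comm x, abs_of_pos hR, hRx]
    have e1 : |2 * t * b| ≤ |t| * (R + 2) := by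
      rw [show 2 * t * b = t * (2 * b) by ring, abs_mul, abs_mul, abs_two]
      gcongr
      linarith
    have e2 : t ^ 2 * a ≤ t ^ 2 := mul_le_of_le_one_right (sq_nonneg t) hv1
    have e3 : 0 ≤ t ^ 2 * a := by positivity
    rw [abs_le] at e1 ⊢
    constructor <;> nlinarith [abs_nonneg t]
  have hqx : |p / 2 * x| ≤ 1 := by
    rw [abs_mul, abs_of_pos (by linarith : 0 < p / 2)]
    refine le_trans ?_ ht
    gcongr
  have h1x : 1 + x = (ρ + 2 * t * b + t ^ 2 * a) / R := by rw [hx]; ring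
  have h5 := one_add_rpow_le (by linarith : 0 ≤ p / 2) (by rw [h1x]; positivity) hqx
  rw [h1x] at h5
  have h6 := mul_le_mul_of_nonneg_left h5 hR.le
  have h7 : (p / 2 * x) ^ 2 ≤ (p / 2 * ((R + 4) / R)) ^ 2 * t ^ 2 := by
    rw [← sq_abs (p / 2 * x)]
    have : |p / 2 * x| ≤ p / 2 * (|t| * ((R + 4) / R)) := by
      rw [abs_mul, abs_of_pos (by linarith : 0 < p / 2)]
      gcongr
    calc |p / 2 * x| ^ 2 ≤ (p / 2 * (|t| * ((R + 4) / R))) ^ 2 := by gcongr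
      _ = (p / 2 * ((R + 4) / R)) ^ 2 * |t| ^ 2 := by ring
      _ = _ := by rw [sq_abs]
  have h8 := mul_le_mul_of_nonneg_left h7 hR.le
  have e2 : t ^ 2 * a ≤ t ^ 2 := mul_le_of_le_one_right (sq_nonneg t) hv1
  have h9 : ρ + p * t * ℓ
      ≤ R + p / 2 * (R * x) + R * ((p / 2 * ((R + 4) / R)) ^ 2 * t ^ 2) := by
    linarith
  rw [hRx] at h9
  set C := (p / 2 * ((R + 4) / R)) ^ 2 with hC
  have h10 : p * (t * (ℓ - b)) ≤ (p + R * C) * t ^ 2 := by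
    have g1 := mul_le_mul_of_nonneg_left e2 (by linarith : 0 ≤ p / 2)
    have g2 := mul_le_mul_of_nonneg_left huR (by linarith : 0 ≤ p / 2 - 1)
    linarith [sq_nonneg t]
  have h11 : (p + R * C) * t ^ 2 ≤ p * ((1 + C * R) * t ^ 2) := by
    have : 0 ≤ R * C * t ^ 2 := by positivity
    linarith [mul_nonneg (by linarith : 0 ≤ p - 1) this]
  have h12 := le_of_mul_le_mul_left (h10.trans h11) (by linarith : 0 < p)
  rw [hpair]
  linarith

end

/-- The dual norm of `E'(u)` on the equivariant subspace. -/
def derivNorm (N : ℕ) (s : ℝ) (Ω : Set (Euc N)) (G : Subgroup (ONgrp N)) (σ : G →* ℤˣ)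
    (u : Euc N → ℝ) : ℝ :=
  sSup {c : ℝ | ∃ φ : Euc N → ℝ, MemHs N s Ω φ ∧
    IsEquivariant G σ φ ∧ gagNorm N s φ ≤ 1 ∧ c = |pairing N s Ω u φ|}

lemma derivNorm_nonneg (N : ℕ) (s : ℝ) (Ω : Set (Euc N)) (G : Subgroup (ONgrp N)) (σ : G →* ℤˣ)
    (u : Euc N → ℝ) : 0 ≤ derivNorm N s Ω G σ u := by
  refine Real.sSup_nonneg ?_
  rintro _ ⟨φ, -, -, -, rfl⟩
  exact abs_nonneg _

/-- Nearly minimal elements of the Nehari manifold, with a quantitative bound on `E'`. -/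
lemma exists_energy_lt_derivNorm_le {N : ℕ} {s : ℝ} {Ω : Set (Euc N)} {G : Subgroup (ONgrp N)}
    {σ : G →* ℤˣ} (hN : 2 ≤ N) (hp : 2 < twoStar N s) {R : ℝ} (hR : 0 < R)
    (hm : mval N s Ω G σ = (1 / 2 - 1 / twoStar N s) * R) {t : ℝ} (ht0 : 0 < t) (ht1 : t ≤ 1)
    (ht : twoStar N s / 2 * (t * ((R + 4) / R)) ≤ 1) :
    ∃ u : Euc N → ℝ, MemHs N s Ω u ∧ IsEquivariant G σ u ∧
      mval N s Ω G σ ≤ energy N s Ω u ∧ energy N s Ω u ≤ mval N s Ω G σ + t ∧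
      derivNorm N s Ω G σ u ≤ (1 + (twoStar N s / 2 * ((R + 4) / R)) ^ 2 * R) * t := by
  have hκ : 0 < 1 / 2 - 1 / twoStar N s :=
    sub_pos.mpr (one_div_lt_one_div_of_lt two_pos hp)
  have hκ1 : 1 / 2 - 1 / twoStar N s ≤ 1 := by
    have : 0 < 1 / twoStar N s := by
      have := two_pos.trans hp
      positivity
    linarith
  have hmpos : 0 < mval N s Ω G σ := hm ▸ mul_pos hκ hR
  have hne : {c : ℝ | ∃ u : Euc N → ℝ, MemHs N s Ω u ∧ IsEquivariant G σ u ∧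
      ¬ (∀ᵐ x : Euc N, u x = 0) ∧ nehariFun N s Ω u = 0 ∧ c = energy N s Ω u}.Nonempty := by
    by_contra h
    rw [Set.not_nonempty_iff_eq_empty] at h
    rw [mval, h, Real.sInf_empty] at hmpos
    exact lt_irrefl _ hmpos
  obtain ⟨_, ⟨u, hu, hG, hu0, hneh, rfl⟩, hlt⟩ := exists_lt_of_csInf_lt hne
    (lt_add_of_pos_right (mval N s Ω G σ) (mul_pos hκ (pow_pos ht0 2)))
  have hle := mval_le hp hu hG hu0 hneh
  have hE := energy_of_nehariFun_eq_zero hneh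
  refine ⟨u, hu, hG, hle, ?_, ?_⟩
  · nlinarith
  rw [hE, hm] at hle hlt
  have hRu : R ≤ gagSq N s u := le_of_mul_le_mul_left hle hκ
  rw [← mul_add] at hlt
  have huR : gagSq N s u ≤ R + t ^ 2 := (lt_of_mul_lt_mul_left hlt hκ.le).le
  refine Real.sSup_le ?_ (by positivity)
  rintro _ ⟨φ, hφ, hGφ, hφ1, rfl⟩
  have hφ2 : gagSq N s φ ≤ 1 := by rwa [gagNorm, Real.sqrt_le_one] at hφ1
  have h1 := mul_neg_pairing_le hN hp hR hm hu hG hneh hφ hGφ hφ2 (t := t)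
    (by rwa [abs_of_pos ht0]) (by rwa [abs_of_pos ht0]) hRu huR
  have h2 := mul_neg_pairing_le hN hp hR hm hu hG hneh hφ hGφ hφ2 (t := -t)
    (by rwa [abs_neg, abs_of_pos ht0]) (by rwa [abs_neg, abs_of_pos ht0]) hRu (by rwa [neg_sq])
  rw [neg_sq] at h2
  rw [abs_le]
  constructor
  · refine le_of_mul_le_mul_left ?_ ht0
    linarith
  · refine le_of_mul_le_mul_left ?_ ht0
    linarith

/-- existence of a Palais–Smale sequence at level `m(Ω)^σ_G`. -/
theorem statement13 (N : ℕ) (s : ℝ) (hN : 2 ≤ N) (hs0 : 0 < s) (hs1 : s < 1)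
    (hsN : 2 * s < N)
    (G : Subgroup (ONgrp N)) (hGc : IsClosed (G : Set (ONgrp N)))
    (σ : G →* ℤˣ) (hσ : Continuous σ) (hσs : Function.Surjective σ) (hG2 : CondG2 G σ)
    (Ω : Set (Euc N)) (hΩ : IsOpen Ω) (hΩG : IsInvariantSet G Ω) :
    ∃ u : ℕ → Euc N → ℝ,
      (∀ n : ℕ, MemHs N s Ω (u n) ∧ IsEquivariant G σ (u n)) ∧
      Filter.Tendsto (fun n => energy N s Ω (u n)) Filter.atTop (nhds (mval N s Ω G σ)) ∧
      Filter.Tendsto (fun n => sSup {c : ℝ | ∃ φ : Euc N → ℝ, MemHs N s Ω φ ∧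
          IsEquivariant G σ φ ∧ gagNorm N s φ ≤ 1 ∧ c = |pairing N s Ω (u n) φ|})
        Filter.atTop (nhds 0) := by
  have hp := two_lt_twoStar hs0 hsN
  have hκ : 0 < 1 / 2 - 1 / twoStar N s :=
    sub_pos.mpr (one_div_lt_one_div_of_lt two_pos hp)
  have hm0 : 0 ≤ mval N s Ω G σ := by
    refine Real.sInf_nonneg ?_
    rintro _ ⟨w, -, -, -, hw, rfl⟩
    rw [energy_of_nehariFun_eq_zero hw]
    exact mul_nonneg hκ.le (gagSq_nonneg N s w)
  rcases hm0.eq_or_lt with hm | hm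
  · refine ⟨fun _ _ => 0, fun _ => ⟨memHs_zero hp, isEquivariant_zero⟩, ?_, ?_⟩
    · have h : energy N s Ω (fun _ => 0) = 0 := by
        simp [energy, gagSq, Real.zero_rpow (by linarith : twoStar N s ≠ 0)]
      simp [← hm, h]
    · refine tendsto_const_nhds.congr fun n => le_antisymm (derivNorm_nonneg N s Ω G σ _) ?_
      refine Real.sSup_le ?_ le_rfl
      rintro _ ⟨φ, -, -, -, rfl⟩
      simp [pairing]
  obtain ⟨R, hR, hmR⟩ : ∃ R, 0 < R ∧ mval N s Ω G σ = (1 / 2 - 1 / twoStar N s) * R :=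
    ⟨mval N s Ω G σ / (1 / 2 - 1 / twoStar N s), div_pos hm hκ, (mul_div_cancel₀ _ hκ.ne').symm⟩
  obtain ⟨K, hK⟩ : ∃ K, K = twoStar N s / 2 * ((R + 4) / R) := ⟨_, rfl⟩
  have hK0 : 0 < K := by
    have := two_pos.trans hp
    rw [hK]
    positivity
  obtain ⟨τ, hτ⟩ : ∃ τ : ℕ → ℝ, τ = fun n : ℕ => 1 / (1 + K) * (1 / ((n : ℝ) + 1)) := ⟨_, rfl⟩
  have hτlim : Filter.Tendsto τ Filter.atTop (nhds 0) := by
    rw [hτ]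
    simpa using (tendsto_one_div_add_atTop_nhds_zero_nat (𝕜 := ℝ)).const_mul (1 / (1 + K))
  have hτ0 : ∀ n, 0 < τ n := fun n => by
    rw [hτ]
    positivity
  have hτK : ∀ n, τ n * (1 + K) ≤ 1 := fun n => by
    have h : 1 / ((n : ℝ) + 1) ≤ 1 := by
      rw [div_le_one (by positivity)]
      linarith [(Nat.cast_nonneg n : (0 : ℝ) ≤ n)]
    calc τ n * (1 + K) = 1 / ((n : ℝ) + 1) := by
          rw [hτ]
          field_simp
      _ ≤ 1 := h
  have key := fun n => exists_energy_lt_derivNorm_le (t := τ n) hN hp hR hmR (hτ0 n)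
    (by nlinarith [hτ0 n, hτK n])
    (by
      have : twoStar N s / 2 * (τ n * ((R + 4) / R)) = τ n * K := by
        rw [hK]
        ring
      nlinarith [hτ0 n, hτK n])
  choose u hu hG h1 h2 h3 using key
  refine ⟨u, fun n => ⟨hu n, hG n⟩, ?_, ?_⟩
  · refine tendsto_of_tendsto_of_tendsto_of_le_of_le tendsto_const_nhds ?_ h1 h2
    simpa using hτlim.const_add (mval N s Ω G σ)
  · refine squeeze_zero (fun n => derivNorm_nonneg N s Ω G σ (u n)) h3 ?_
    simpa using hτlim.const_mul (1 + (twoStar N s / 2 * ((R + 4) / R)) ^ 2 * R)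

end
end
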